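/- arXiv:1201.1975 — 2 statements merged into one kernel-verified Lean document; each statement's English description precedes it below -/
import Mathlib

section
/- For every positive integer n, the iterated improper integral I_n = ∫_{-∞}^{∞} ds₁ ∫_{-∞}^{s₁} ds₂ ⋯ ∫_{-∞}^{s_{2n-1}} ds_{2n} cos(s₁² − s₂²)·cos(s₃² − s₄²)⋯cos(s_{2n-1}² − s_{2n}²) converges and equals (2/n!)·(π/4)ⁿ. -/
open Real MeasureTheory Filter Topology


namespace LZ

noncomputable def Zf : ℕ → ℝ → ℝ → ℝ
  | 0, _, _ => 1
  | (n+1), a, t => ∫ u in a..t, (cos (u^2) * (∫ v in a..u, cos (v^2) * Zf n a v)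
      + sin (u^2) * (∫ v in a..u, sin (v^2) * Zf n a v))

noncomputable def Xf (n : ℕ) (a t : ℝ) : ℝ := ∫ v in a..t, cos (v^2) * Zf n a v
noncomputable def Yf (n : ℕ) (a t : ℝ) : ℝ := ∫ v in a..t, sin (v^2) * Zf n a v

lemma Zf_zero (a t : ℝ) : Zf 0 a t = 1 := by simp [Zf]
lemma Zf_succ (n : ℕ) (a t : ℝ) : Zf (n+1) a t =
    ∫ u in a..t, (cos (u^2) * Xf n a u + sin (u^2) * Yf n a u) := by
  simp [Zf, Xf, Yf]

lemma cont_prim {f : ℝ → ℝ} (hf : Continuous f) (a : ℝ) :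
    Continuous (fun t => ∫ v in a..t, f v) :=
  intervalIntegral.continuous_primitive (fun _ _ => hf.intervalIntegrable _ _) a

lemma deriv_prim {f : ℝ → ℝ} (hf : Continuous f) (a t : ℝ) :
    HasDerivAt (fun t => ∫ v in a..t, f v) (f t) t :=
  intervalIntegral.integral_hasDerivAt_right (hf.intervalIntegrable _ _)
    (hf.stronglyMeasurableAtFilter _ _) hf.continuousAt

lemma Zf_cont (n : ℕ) (a : ℝ) : Continuous (Zf n a) := by
  induction n with
  | zero => 
    have : Zf 0 a = fun _ => 1 := by ext t; exact Zf_zero a t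
    rw [this]; exact continuous_const
  | succ n ih =>
    have : Zf (n+1) a = fun t => ∫ u in a..t, (cos (u^2) * Xf n a u + sin (u^2) * Yf n a u) := by
      ext t; exact Zf_succ n a t
    rw [this]
    have hX : Continuous (Xf n a) := cont_prim (by fun_prop) a
    have hY : Continuous (Yf n a) := cont_prim (by fun_prop) a
    exact cont_prim (by fun_prop) a

lemma Xf_cont (n : ℕ) (a : ℝ) : Continuous (Xf n a) :=
  cont_prim (by have := Zf_cont n a; fun_prop) a
lemma Yf_cont (n : ℕ) (a : ℝ) : Continuous (Yf n a) :=
  cont_prim (by have := Zf_cont n a; fun_prop) a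

lemma Xf_deriv (n : ℕ) (a t : ℝ) : HasDerivAt (Xf n a) (cos (t^2) * Zf n a t) t :=
  deriv_prim (f := fun v => cos (v^2) * Zf n a v) (by have := Zf_cont n a; fun_prop) a t
lemma Yf_deriv (n : ℕ) (a t : ℝ) : HasDerivAt (Yf n a) (sin (t^2) * Zf n a t) t :=
  deriv_prim (f := fun v => sin (v^2) * Zf n a v) (by have := Zf_cont n a; fun_prop) a t
lemma Zf_deriv_succ (n : ℕ) (a t : ℝ) :
    HasDerivAt (Zf (n+1) a) (cos (t^2) * Xf n a t + sin (t^2) * Yf n a t) t := by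
  have : Zf (n+1) a = fun t => ∫ u in a..t, (cos (u^2) * Xf n a u + sin (u^2) * Yf n a u) := by
      ext t; exact Zf_succ n a t
  rw [this]
  have := Xf_cont n a
  have := Yf_cont n a
  exact deriv_prim (f := fun u => (cos (u^2) * Xf n a u + sin (u^2) * Yf n a u)) (by fun_prop) a t

/-- uniform derivative formula -/
noncomputable def dZ : ℕ → ℝ → ℝ → ℝ
  | 0, _, _ => 0
  | (n+1), a, t => cos (t^2) * Xf n a t + sin (t^2) * Yf n a t

lemma Zf_deriv (n : ℕ) (a t : ℝ) : HasDerivAt (Zf n a) (dZ n a t) t := by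
  cases n with
  | zero =>
    have : Zf 0 a = fun _ => 1 := by ext t; exact Zf_zero a t
    rw [this]; exact hasDerivAt_const _ _
  | succ n => exact Zf_deriv_succ n a t

lemma Xf_self (n : ℕ) (a : ℝ) : Xf n a a = 0 := by simp [Xf]
lemma Yf_self (n : ℕ) (a : ℝ) : Yf n a a = 0 := by simp [Yf]
lemma Zf_self_succ (n : ℕ) (a : ℝ) : Zf (n+1) a a = 0 := by simp [Zf_succ]

lemma neg_int (f : ℝ → ℝ) (a t : ℝ) : ∫ v in (-a)..(-t), f v = - ∫ v in a..t, f (-v) := by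
  rw [intervalIntegral.integral_comp_neg, intervalIntegral.integral_symm]

lemma Zf_neg (n : ℕ) : ∀ (a t : ℝ), Zf n (-a) (-t) = Zf n a t := by
  induction n with
  | zero => intro a t; simp [Zf_zero]
  | succ n ih =>
    intro a t
    have hX : ∀ t, Xf n (-a) (-t) = - Xf n a t := by
      intro t; unfold Xf; rw [neg_int]; simp [ih]
    have hY : ∀ t, Yf n (-a) (-t) = - Yf n a t := by
      intro t; unfold Yf; rw [neg_int]; simp [ih]
    rw [Zf_succ, Zf_succ, neg_int, ← intervalIntegral.integral_neg]
    congr 1; ext v; simp only [hX, hY]; rw [neg_sq]; ring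

lemma Xf_neg (n : ℕ) (a t : ℝ) : Xf n (-a) (-t) = - Xf n a t := by
  unfold Xf; rw [neg_int]; simp [Zf_neg]
lemma Yf_neg (n : ℕ) (a t : ℝ) : Yf n (-a) (-t) = - Yf n a t := by
  unfold Yf; rw [neg_int]; simp [Zf_neg]

/-- conserved form -/
noncomputable def Q (n : ℕ) (a b t : ℝ) : ℝ :=
  (∑ p ∈ Finset.HasAntidiagonal.antidiagonal (n+1), Zf p.1 a t * Zf p.2 b t)
   - ∑ p ∈ Finset.HasAntidiagonal.antidiagonal n, (Xf p.1 a t * Xf p.2 b t + Yf p.1 a t * Yf p.2 b t)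

lemma Q_deriv (n : ℕ) (a b t : ℝ) : HasDerivAt (Q n a b) 0 t := by
  have h1 : HasDerivAt (fun t => ∑ p ∈ Finset.HasAntidiagonal.antidiagonal (n+1), Zf p.1 a t * Zf p.2 b t)
      (∑ p ∈ Finset.HasAntidiagonal.antidiagonal (n+1), (dZ p.1 a t * Zf p.2 b t + Zf p.1 a t * dZ p.2 b t)) t :=
    HasDerivAt.fun_sum fun p _ => (Zf_deriv p.1 a t).mul (Zf_deriv p.2 b t)
  have h2 : HasDerivAt (fun t => ∑ p ∈ Finset.HasAntidiagonal.antidiagonal n,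
      (Xf p.1 a t * Xf p.2 b t + Yf p.1 a t * Yf p.2 b t))
      (∑ p ∈ Finset.HasAntidiagonal.antidiagonal n,
        (((cos (t^2) * Zf p.1 a t) * Xf p.2 b t + Xf p.1 a t * (cos (t^2) * Zf p.2 b t))
        + ((sin (t^2) * Zf p.1 a t) * Yf p.2 b t + Yf p.1 a t * (sin (t^2) * Zf p.2 b t)))) t :=
    HasDerivAt.fun_sum fun p _ => ((Xf_deriv p.1 a t).mul (Xf_deriv p.2 b t)).add
      ((Yf_deriv p.1 a t).mul (Yf_deriv p.2 b t))
  have h3 := h1.sub h2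
  refine HasDerivAt.congr_deriv (show HasDerivAt (Q n a b) _ t from h3) ?_
  rw [Finset.sum_add_distrib, Finset.Nat.sum_antidiagonal_succ,
    Finset.Nat.sum_antidiagonal_succ' (f := fun p => Zf p.1 a t * dZ p.2 b t)]
  simp only [dZ, zero_mul, mul_zero, zero_add, add_zero]
  rw [← Finset.sum_add_distrib, ← Finset.sum_sub_distrib]
  apply Finset.sum_eq_zero
  intro p _; ring

lemma Q_const (n : ℕ) (a b t t' : ℝ) : Q n a b t = Q n a b t' :=
  is_const_of_deriv_eq_zero (fun t => (Q_deriv n a b t).differentiableAt)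
    (fun t => (Q_deriv n a b t).deriv) t t'

lemma Q_right (n : ℕ) (a b : ℝ) : Q n a b b = Zf (n+1) a b := by
  unfold Q
  rw [Finset.Nat.sum_antidiagonal_succ']
  simp [Xf_self, Yf_self, Zf_self_succ, Zf_zero]

lemma Q_left (n : ℕ) (a b : ℝ) : Q n a b a = Zf (n+1) b a := by
  unfold Q
  rw [Finset.Nat.sum_antidiagonal_succ]
  simp [Xf_self, Yf_self, Zf_self_succ, Zf_zero]

lemma Zf_swap (n : ℕ) (a b : ℝ) : Zf n a b = Zf n b a := by
  cases n with
  | zero => simp [Zf_zero]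
  | succ n => rw [← Q_right, ← Q_left]; exact Q_const _ _ _ _ _

lemma Zf_quad (n : ℕ) (T : ℝ) : Zf (n+1) (-T) T =
    2 * ∑ p ∈ Finset.HasAntidiagonal.antidiagonal (n+1), Zf p.1 0 T * Zf p.2 0 T := by
  have h1 : Q n (-T) T 0 = Zf (n+1) (-T) T := by rw [← Q_right]; exact Q_const _ _ _ _ _
  have h2 : Q n (-T) (-T) 0 = 0 := by
    rw [Q_const n (-T) (-T) 0 (-T), Q_right, Zf_self_succ]
  have hz : ∀ n, Zf n (-T) 0 = Zf n 0 T := by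
    intro n; rw [← neg_zero, Zf_neg, Zf_swap, neg_zero]
  have hz' : ∀ n, Zf n T 0 = Zf n 0 T := fun n => Zf_swap _ _ _
  have hx : ∀ n, Xf n (-T) 0 = - Xf n T 0 := by
    intro n; have := Xf_neg n T 0; rwa [neg_zero] at this
  have hy : ∀ n, Yf n (-T) 0 = - Yf n T 0 := by
    intro n; have := Yf_neg n T 0; rwa [neg_zero] at this
  rw [← h1]
  unfold Q at h2 ⊢
  simp only [hz, hz', hx, hy] at h2 ⊢
  have e1 : (∑ p ∈ Finset.HasAntidiagonal.antidiagonal n, (-Xf p.1 T 0 * Xf p.2 T 0 + -Yf p.1 T 0 * Yf p.2 T 0))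
    = -∑ p ∈ Finset.HasAntidiagonal.antidiagonal n, (-Xf p.1 T 0 * -Xf p.2 T 0 + -Yf p.1 T 0 * -Yf p.2 T 0) := by
    rw [← Finset.sum_neg_distrib]; apply Finset.sum_congr rfl; intros; ring
  rw [e1]; linarith

end LZ

namespace LZ

lemma growth {F S c K k : ℝ → ℝ} {C : ℝ} (hC : 0 ≤ C)
    (hF : ∀ t, HasDerivAt F (c t * K t) t)
    (hS : ∀ t, HasDerivAt S (2 * t * c t) t) (hS1 : ∀ t, |S t| ≤ 1)
    (hK : ∀ t, HasDerivAt K (k t) t) (hKC : ∀ t, 1 ≤ t → |K t| ≤ C)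
    (hk : ∀ t, 1 ≤ t → |k t| ≤ C * √t) :
    ∃ D, 0 ≤ D ∧ ∀ t, 1 ≤ t → |F t| ≤ D * √t := by
  set P : ℝ → ℝ := fun t => F t - S t / (2 * t) * K t with hP
  have hPd : ∀ t, 1 ≤ t → HasDerivAt P (S t / (2 * t^2) * K t - S t / (2 * t) * k t) t := by
    intro t ht
    have ht0 : t ≠ 0 := by positivity
    have h := (hF t).sub (((hS t).div ((hasDerivAt_id t).const_mul 2)
      (by simpa using ht0)).mul (hK t))
    refine HasDerivAt.congr_deriv (show HasDerivAt P _ t from h) ?_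
    simp only [id, Pi.div_apply]
    field_simp
    ring
  have hb : ∀ t, 1 ≤ t → |P t| ≤ |P 1| + 2 * C * √t := by
    intro t ht
    have := image_norm_le_of_norm_deriv_right_le_deriv_boundary' (f := P) (a := 1) (b := t)
      (f' := fun t => S t / (2 * t^2) * K t - S t / (2 * t) * k t)
      (B := fun t => |P 1| + 2 * C * √t) (B' := fun t => 2 * C * (1 / (2 * √t)))
      (fun x hx => (hPd x hx.1).continuousAt.continuousWithinAt)
      (fun x hx => (hPd x hx.1).hasDerivWithinAt)
      (by simp; positivity) (by fun_prop)
      (fun x hx => (((Real.hasDerivAt_sqrt (by linarith [hx.1])).const_mul _).const_add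
        _).hasDerivWithinAt)
      ?_ (Set.right_mem_Icc.2 ht)
    · simpa using this
    · intro x hx
      have hx1 : 1 ≤ x := hx.1
      have hs1 : 1 ≤ √x := by rw [Real.one_le_sqrt]; exact hx1
      have hxs : x = √x * √x := (Real.mul_self_sqrt (by linarith)).symm
      have e1 : |S x / (2 * x^2) * K x| ≤ 1 / (2 * x^2) * C := by
        rw [abs_mul, abs_div, abs_of_pos (by positivity : 0 < 2 * x^2)]
        gcongr
        · exact hS1 x
        · exact hKC x hx1
      have e2 : |S x / (2 * x) * k x| ≤ 1 / (2 * x) * (C * √x) := by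
        rw [abs_mul, abs_div, abs_of_pos (by positivity : 0 < 2 * x)]
        gcongr
        · exact hS1 x
        · exact hk x hx1
      have e3 : 1 / (2 * x^2) * C ≤ 1 / (2 * √x) * C := by
        gcongr
        nlinarith
      have e4 : 1 / (2 * x) * (C * √x) = 1 / (2 * √x) * C := by
        nth_rewrite 1 [hxs]
        field_simp
      rw [Real.norm_eq_abs]
      calc _ ≤ _ := abs_sub _ _
        _ ≤ _ := add_le_add e1 e2
        _ ≤ 1 / (2 * √x) * C + 1 / (2 * √x) * C := by rw [e4]; gcongr
        _ = _ := by ring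
  refine ⟨|P 1| + 2 * C + C, by positivity, fun t ht => ?_⟩
  have hs1 : 1 ≤ √t := by rw [Real.one_le_sqrt]; exact ht
  have e : F t = P t + S t / (2 * t) * K t := by simp [hP]
  have e1 : |S t / (2 * t) * K t| ≤ 1 * C := by
    rw [abs_mul]
    gcongr
    · rw [abs_div, abs_of_pos (by linarith : 0 < 2 * t), div_le_one (by linarith)]
      linarith [hS1 t]
    · exact hKC t ht
  calc |F t| ≤ |P t| + |S t / (2 * t) * K t| := by rw [e]; exact abs_add_le _ _
    _ ≤ (|P 1| + 2 * C * √t) + 1 * C := add_le_add (hb t ht) e1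
    _ ≤ (|P 1| + 2 * C + C) * √t := by nlinarith [abs_nonneg (P 1)]

noncomputable def xr (n : ℕ) (t : ℝ) : ℝ := cos (t^2) * Xf n 0 t + sin (t^2) * Yf n 0 t
noncomputable def yr (n : ℕ) (t : ℝ) : ℝ := sin (t^2) * Xf n 0 t - cos (t^2) * Yf n 0 t

lemma cos_d (t : ℝ) : HasDerivAt (fun t => cos (t^2)) (-sin (t^2) * (2 * t)) t := by
  simpa using (hasDerivAt_pow 2 t).cos
lemma sin_d (t : ℝ) : HasDerivAt (fun t => sin (t^2)) (cos (t^2) * (2 * t)) t := by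
  simpa using (hasDerivAt_pow 2 t).sin

lemma xr_deriv (n : ℕ) (t : ℝ) : HasDerivAt (xr n) (-2 * t * yr n t + Zf n 0 t) t := by
  have h := ((cos_d t).mul (Xf_deriv n 0 t)).add ((sin_d t).mul (Yf_deriv n 0 t))
  refine HasDerivAt.congr_deriv (show HasDerivAt (xr n) _ t from h) ?_
  have := sin_sq_add_cos_sq (t^2)
  simp only [yr]
  linear_combination (Zf n 0 t) * this

lemma yr_deriv (n : ℕ) (t : ℝ) : HasDerivAt (yr n) (2 * t * xr n t) t := by
  have h := ((sin_d t).mul (Xf_deriv n 0 t)).sub ((cos_d t).mul (Yf_deriv n 0 t))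
  refine HasDerivAt.congr_deriv (show HasDerivAt (yr n) _ t from h) ?_
  simp only [xr]
  ring

lemma K_deriv (n : ℕ) (t : ℝ) : HasDerivAt (Zf (n+1) 0) (xr n t) t := Zf_deriv_succ n 0 t

lemma comb_bound {a b x y M : ℝ} (ha : |a| ≤ 1) (hb : |b| ≤ 1) (hx : |x| ≤ M) (hy : |y| ≤ M) :
    |a * x + b * y| ≤ 2 * M := by
  have h1 : |a * x| ≤ 1 * M := by rw [abs_mul]; gcongr
  have h2 : |b * y| ≤ 1 * M := by rw [abs_mul]; gcongr
  linarith [abs_add_le (a * x) (b * y)]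

lemma K_even (n : ℕ) (t : ℝ) : Zf n 0 (-t) = Zf n 0 t := by
  have := Zf_neg n 0 t; rwa [neg_zero] at this

lemma bounded_of_tendsto {f : ℝ → ℝ} (hf : Continuous f) {L : ℝ} (h : Tendsto f atTop (𝓝 L))
    (he : ∀ t, f (-t) = f t) : ∃ C, 0 ≤ C ∧ ∀ t, |f t| ≤ C := by
  have h1 : ∀ᶠ t in atTop, |f t| < |L| + 1 := h.abs.eventually_lt_const (by linarith)
  obtain ⟨M, hM⟩ := eventually_atTop.1 h1
  obtain ⟨C, hC⟩ := (isCompact_Icc (a := (0:ℝ)) (b := M)).exists_bound_of_continuousOn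
    hf.continuousOn
  have key : ∀ t, 0 ≤ t → |f t| ≤ max (|L| + 1) C := by
    intro t ht
    rcases le_total M t with hm | hm
    · exact (hM t hm).le.trans (le_max_left _ _)
    · exact (hC t ⟨ht, hm⟩).trans (le_max_right _ _)
  refine ⟨max (|L| + 1) C, le_max_of_le_left (by positivity), fun t => ?_⟩
  rcases le_total 0 t with ht | ht
  · exact key t ht
  · rw [← he t]; exact key _ (by linarith)

lemma K_main (n : ℕ) : ∃ C, 0 ≤ C ∧ (∀ t, |Zf n 0 t| ≤ C) ∧ (∀ t, 1 ≤ t → |dZ n 0 t| ≤ C * √t) ∧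
    ∃ L, Tendsto (Zf n 0) atTop (𝓝 L) := by
  induction n with
  | zero =>
    refine ⟨1, zero_le_one, fun t => by simp [Zf_zero], fun t _ => by simp [dZ], 1, ?_⟩
    have : Zf 0 0 = fun _ => 1 := by ext t; exact Zf_zero 0 t
    rw [this]; exact tendsto_const_nhds
  | succ n ih =>
    obtain ⟨C, hC, hK, hk, -⟩ := ih
    obtain ⟨D1, hD1, hX⟩ := growth (F := Xf n 0) (S := fun t => sin (t^2))
      (c := fun t => cos (t^2)) (K := Zf n 0) (k := dZ n 0) hC (Xf_deriv n 0)
      (fun t => (sin_d t).congr_deriv (by ring)) (fun t => abs_sin_le_one _) (Zf_deriv n 0)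
      (fun t _ => hK t) hk
    obtain ⟨D2, hD2, hY⟩ := growth (F := Yf n 0) (S := fun t => -cos (t^2))
      (c := fun t => sin (t^2)) (K := Zf n 0) (k := dZ n 0) hC (Yf_deriv n 0)
      (fun t => (cos_d t).neg.congr_deriv (by ring))
      (fun t => by rw [abs_neg]; exact abs_cos_le_one _) (Zf_deriv n 0)
      (fun t _ => hK t) hk
    have hX' : ∀ t, 1 ≤ t → |Xf n 0 t| ≤ (D1 + D2) * √t := fun t ht =>
      (hX t ht).trans (by gcongr; linarith)
    have hY' : ∀ t, 1 ≤ t → |Yf n 0 t| ≤ (D1 + D2) * √t := fun t ht =>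
      (hY t ht).trans (by gcongr; linarith)
    have hxr : ∀ t, 1 ≤ t → |xr n t| ≤ 2 * ((D1 + D2) * √t) := fun t ht =>
      comb_bound (abs_cos_le_one _) (abs_sin_le_one _) (hX' t ht) (hY' t ht)
    have hyr : ∀ t, 1 ≤ t → |yr n t| ≤ 2 * ((D1 + D2) * √t) := fun t ht => by
      have := comb_bound (a := sin (t^2)) (b := - cos (t^2)) (abs_sin_le_one _)
        (by rw [abs_neg]; exact abs_cos_le_one _) (hX' t ht) (hY' t ht)
      simpa [yr, sub_eq_add_neg] using this
    set E := D1 + D2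
    have hE : 0 ≤ E := add_nonneg hD1 hD2
    have hQd : ∀ t ∈ Set.Ioi (1:ℝ), HasDerivAt (fun t => Zf (n+1) 0 t - yr n t / (2 * t))
        (yr n t / (2 * t^2)) t := by
      intro t ht
      have ht0 : t ≠ 0 := by have : 1 < t := ht; positivity
      have h := (K_deriv n t).sub ((yr_deriv n t).div ((hasDerivAt_id t).const_mul 2)
        (by simpa using ht0))
      refine h.congr_deriv ?_
      simp only [id]
      field_simp
      ring
    have hyc : Continuous (yr n) := continuous_iff_continuousAt.2
      fun t => (yr_deriv n t).continuousAt
    have hint : IntegrableOn (fun t => yr n t / (2 * t^2)) (Set.Ioi (1:ℝ)) := by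
      have h0 := (integrableOn_Ioi_rpow_of_lt (a := -3/2) (by norm_num) (zero_lt_one)).const_mul E
      refine Integrable.mono' h0 ?_ ?_
      · exact (hyc.measurable.div (by fun_prop)).aestronglyMeasurable
      · refine (ae_restrict_iff' measurableSet_Ioi).2 (Eventually.of_forall fun t ht => ?_)
        have ht1 : 1 < t := ht
        have e : t ^ (-3/2 : ℝ) = √t / t^2 := by
          rw [Real.sqrt_eq_rpow, ← Real.rpow_natCast, ← Real.rpow_sub (by linarith)]
          norm_num
        rw [e, Real.norm_eq_abs, abs_div, abs_of_pos (by positivity : 0 < 2 * t^2),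
          div_le_iff₀ (by positivity)]
        refine (hyr t ht1.le).trans (le_of_eq ?_)
        field_simp
    have hlim := tendsto_limUnder_of_hasDerivAt_of_integrableOn_Ioi hQd hint
    have hz : Tendsto (fun t => yr n t / (2 * t)) atTop (𝓝 0) := by
      have h0 : Tendsto (fun t : ℝ => E * t ^ (-(1/2) : ℝ)) atTop (𝓝 (E * 0)) :=
        (tendsto_rpow_neg_atTop (by norm_num)).const_mul E
      rw [mul_zero] at h0
      refine squeeze_zero_norm' ?_ h0
      filter_upwards [eventually_ge_atTop 1] with t ht
      have e : t ^ (-(1/2) : ℝ) = √t / t := by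
        nth_rewrite 3 [← Real.rpow_one t]
        rw [Real.sqrt_eq_rpow, ← Real.rpow_sub (by linarith)]
        norm_num
      rw [e, Real.norm_eq_abs, abs_div, abs_of_pos (by positivity : 0 < 2 * t),
          div_le_iff₀ (by positivity)]
      refine (hyr t ht).trans (le_of_eq ?_)
      field_simp
    have hK' := hlim.add hz
    simp only [sub_add_cancel] at hK'
    obtain ⟨C', hC', hb⟩ := bounded_of_tendsto (Zf_cont (n+1) 0) hK' (K_even (n+1))
    refine ⟨C' + 2 * E, by positivity, fun t => (hb t).trans (by linarith), fun t ht => ?_, _, hK'⟩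
    refine (hxr t ht).trans ?_
    rw [← mul_assoc]; gcongr; linarith

end LZ

namespace LZ

lemma gint_base : Integrable (fun u : ℝ => exp (-1 * u^2) * (1 + u^2)) := by
  have h1 := integrable_exp_neg_mul_sq (b := 1) one_pos
  have h2 := integrable_rpow_mul_exp_neg_mul_sq (b := 1) one_pos (s := 2) (by norm_num)
  refine (h1.add h2).congr (Eventually.of_forall fun u => ?_)
  simp only [Pi.add_apply, Real.rpow_two]
  ring

lemma gint {g : ℝ → ℝ} (hg : Continuous g) {D : ℝ} (h : ∀ u, |g u| ≤ D * (1 + u^2)) :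
    Integrable (fun u : ℝ => exp (-1 * u^2) * g u) := by
  refine Integrable.mono' (gint_base.const_mul D) (by fun_prop) (Eventually.of_forall fun u => ?_)
  rw [Real.norm_eq_abs, abs_mul, abs_of_pos (exp_pos _)]
  calc _ ≤ exp (-1 * u^2) * (D * (1 + u^2)) := by gcongr; exact h u
    _ = _ := by ring

lemma xr_cont (n : ℕ) : Continuous (xr n) :=
  continuous_iff_continuousAt.2 fun t => (xr_deriv n t).continuousAt
lemma yr_cont (n : ℕ) : Continuous (yr n) :=
  continuous_iff_continuousAt.2 fun t => (yr_deriv n t).continuousAt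

lemma xy_bound (n : ℕ) : ∃ C, 0 ≤ C ∧ (∀ t, |Zf n 0 t| ≤ C) ∧ (∀ t, |xr n t| ≤ C * |t|) ∧
    (∀ t, |yr n t| ≤ C * |t|) := by
  obtain ⟨C, hC, hK, -⟩ := K_main n
  have hX : ∀ t, |Xf n 0 t| ≤ C * |t| := fun t => by
    have := intervalIntegral.norm_integral_le_of_norm_le_const (a := 0) (b := t) (C := C)
      (f := fun v => cos (v^2) * Zf n 0 v) (fun x _ => by
        rw [Real.norm_eq_abs, abs_mul]
        nlinarith [abs_cos_le_one (x^2), hK x, abs_nonneg (Zf n 0 x)])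
    simpa [Xf] using this
  have hY : ∀ t, |Yf n 0 t| ≤ C * |t| := fun t => by
    have := intervalIntegral.norm_integral_le_of_norm_le_const (a := 0) (b := t) (C := C)
      (f := fun v => sin (v^2) * Zf n 0 v) (fun x _ => by
        rw [Real.norm_eq_abs, abs_mul]
        nlinarith [abs_sin_le_one (x^2), hK x, abs_nonneg (Zf n 0 x)])
    simpa [Yf] using this
  refine ⟨2 * C, by positivity, fun t => (hK t).trans (by linarith), fun t => ?_, fun t => ?_⟩
  · rw [mul_assoc]
    exact comb_bound (abs_cos_le_one _) (abs_sin_le_one _) (hX t) (hY t)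
  · have := comb_bound (a := sin (t^2)) (b := - cos (t^2)) (abs_sin_le_one _)
        (by rw [abs_neg]; exact abs_cos_le_one _) (hX t) (hY t)
    rw [mul_assoc]
    simpa [yr, sub_eq_add_neg] using this

noncomputable def G (n : ℕ) (r : ℝ) : ℝ := ∫ u : ℝ, exp (-1 * u^2) * Zf n 0 (r * u)

lemma expd (u : ℝ) : HasDerivAt (fun u => exp (-1 * u^2)) (exp (-1 * u^2) * (-1 * (2 * u))) u := by
  simpa using ((hasDerivAt_pow 2 u).const_mul (-1)).exp

lemma abs_le_one_add_sq (u : ℝ) : |u| ≤ 1 + u^2 := by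
  rw [← sq_abs]; nlinarith [sq_nonneg (|u| - 1), abs_nonneg u]

lemma G_deriv (n : ℕ) (r : ℝ) :
    HasDerivAt (G (n+1)) (∫ u : ℝ, exp (-1 * u^2) * (u * xr n (r * u))) r := by
  obtain ⟨C, hC, hK, hx, hy⟩ := xy_bound n
  obtain ⟨C1, hC1, hK1, -⟩ := xy_bound (n+1)
  have hZc := Zf_cont (n+1) 0
  have hxc := xr_cont n
  refine (hasDerivAt_integral_of_dominated_loc_of_deriv_le (μ := volume)
    (F := fun r u => exp (-1 * u^2) * Zf (n+1) 0 (r * u))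
    (F' := fun r u => exp (-1 * u^2) * (u * xr n (r * u)))
    (s := Metric.ball r 1)
    (bound := fun u => (C * (|r| + 1)) * (exp (-1 * u^2) * (1 + u^2)))
    (Metric.ball_mem_nhds r one_pos) ?_ ?_ ?_ ?_ (gint_base.const_mul _) ?_).2
  · exact Eventually.of_forall fun r => by fun_prop
  · refine gint (D := C1) (by fun_prop) fun u => (hK1 _).trans ?_
    nlinarith [sq_nonneg u]
  · fun_prop
  · refine Eventually.of_forall fun u ρ hρ => ?_
    have hρ' : |ρ| ≤ |r| + 1 := by
      have h1 : |ρ - r| < 1 := by simpa [Real.dist_eq] using hρ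
      have h2 := abs_add_le (ρ - r) r
      rw [sub_add_cancel] at h2
      linarith
    rw [Real.norm_eq_abs, abs_mul, abs_of_pos (exp_pos _), abs_mul]
    have h3 : |u| * |xr n (ρ * u)| ≤ (C * (|r| + 1)) * (1 + u^2) := by
      calc _ ≤ |u| * (C * |ρ * u|) := by gcongr; exact hx _
        _ = C * |ρ| * |u|^2 := by rw [abs_mul]; ring
        _ ≤ C * (|r| + 1) * (1 + u^2) := by rw [sq_abs]; gcongr; linarith
    calc _ ≤ exp (-1 * u^2) * ((C * (|r| + 1)) * (1 + u^2)) := by gcongr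
      _ = _ := by ring
  · refine Eventually.of_forall fun u ρ hρ => ?_
    have h1 : HasDerivAt (fun ρ : ℝ => ρ * u) u ρ := by simpa using (hasDerivAt_id ρ).mul_const u
    have h := (HasDerivAt.comp ρ (K_deriv n (ρ * u)) h1).const_mul (exp (-1 * u^2))
    exact h.congr_deriv (by ring)

lemma G_rel (n : ℕ) (r : ℝ) :
    2 * (1 + r^4) * (∫ u : ℝ, exp (-1 * u^2) * (u * xr n (r * u))) = r * G n r := by
  obtain ⟨C, hC, hK, hx, hy⟩ := xy_bound n
  have hZc := Zf_cont n 0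
  have hxc := xr_cont n
  have hyc := yr_cont n
  have i1 : Integrable (fun u : ℝ => exp (-1 * u^2) * (u * xr n (r * u))) :=
    gint (D := C * |r|) (by fun_prop) fun u => by
      calc |u * xr n (r * u)| = |u| * |xr n (r * u)| := abs_mul _ _
        _ ≤ |u| * (C * |r * u|) := by gcongr; exact hx _
        _ = C * |r| * |u|^2 := by rw [abs_mul]; ring
        _ ≤ _ := by rw [sq_abs]; gcongr; linarith
  have i2 : Integrable (fun u : ℝ => exp (-1 * u^2) * (u * yr n (r * u))) :=
    gint (D := C * |r|) (by fun_prop) fun u => by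
      calc |u * yr n (r * u)| = |u| * |yr n (r * u)| := abs_mul _ _
        _ ≤ |u| * (C * |r * u|) := by gcongr; exact hy _
        _ = C * |r| * |u|^2 := by rw [abs_mul]; ring
        _ ≤ _ := by rw [sq_abs]; gcongr; linarith
  have i3 : Integrable (fun u : ℝ => exp (-1 * u^2) * xr n (r * u)) :=
    gint (D := C * |r|) (by fun_prop) fun u => by
      calc |xr n (r * u)| ≤ (C * |r * u|) := hx _
        _ = C * |r| * |u| := by rw [abs_mul]; ring
        _ ≤ _ := by gcongr; exact abs_le_one_add_sq u
  have i4 : Integrable (fun u : ℝ => exp (-1 * u^2) * yr n (r * u)) :=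
    gint (D := C * |r|) (by fun_prop) fun u => by
      calc |yr n (r * u)| ≤ (C * |r * u|) := hy _
        _ = C * |r| * |u| := by rw [abs_mul]; ring
        _ ≤ _ := by gcongr; exact abs_le_one_add_sq u
  have i5 : Integrable (fun u : ℝ => exp (-1 * u^2) * Zf n 0 (r * u)) :=
    gint (D := C) (by fun_prop) fun u => (hK _).trans (by nlinarith [sq_nonneg u])
  have hl : ∀ u : ℝ, HasDerivAt (fun u : ℝ => r * u) r u := fun u => by
    simpa using (hasDerivAt_id u).const_mul r
  have e1 := integral_eq_zero_of_hasDerivAt_of_integrable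
    (f := fun u => exp (-1 * u^2) * yr n (r * u))
    (f' := fun u => (-2) * (exp (-1 * u^2) * (u * yr n (r * u)))
      + 2 * r^2 * (exp (-1 * u^2) * (u * xr n (r * u))))
    (fun u => ((expd u).mul (HasDerivAt.comp u (yr_deriv n (r * u)) (hl u))).congr_deriv (by simp only [Function.comp]; ring))
    ((i2.const_mul _).add (i1.const_mul _)) i4
  have e2 := integral_eq_zero_of_hasDerivAt_of_integrable
    (f := fun u => exp (-1 * u^2) * xr n (r * u))
    (f' := fun u => ((-2) * (exp (-1 * u^2) * (u * xr n (r * u)))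
      + (-2 * r^2) * (exp (-1 * u^2) * (u * yr n (r * u))))
      + r * (exp (-1 * u^2) * Zf n 0 (r * u)))
    (fun u => ((expd u).mul (HasDerivAt.comp u (xr_deriv n (r * u)) (hl u))).congr_deriv (by simp only [Function.comp]; ring))
    (((i1.const_mul _).add (i2.const_mul _)).add (i5.const_mul _)) i3
  rw [integral_add (i2.const_mul _) (i1.const_mul _), integral_const_mul, integral_const_mul] at e1
  have i12 : Integrable (fun u => (-2) * (exp (-1 * u^2) * (u * xr n (r * u)))
      + (-2 * r^2) * (exp (-1 * u^2) * (u * yr n (r * u)))) :=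
    (i1.const_mul _).add (i2.const_mul _)
  rw [integral_add i12 (i5.const_mul _),
    integral_add (i1.const_mul _) (i2.const_mul _), integral_const_mul, integral_const_mul,
    integral_const_mul] at e2
  unfold G
  linear_combination (-1) * e2 + r^2 * e1

lemma G_formula (n : ℕ) : ∀ r, G n r = √π * ((arctan (r^2) / 4)^n / n.factorial) := by
  induction n with
  | zero =>
    intro r
    have := integral_gaussian 1
    simp only [G, Zf_zero, mul_one]
    simpa using this
  | succ n ih =>
    have hd : ∀ r, HasDerivAt (fun r => G (n+1) r -
        √π * ((arctan (r^2) / 4)^(n+1) / (n+1).factorial)) 0 r := by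
      intro r
      have h1 := G_deriv n r
      have h2 := G_rel n r
      rw [ih] at h2
      have h3 := (((((hasDerivAt_pow 2 r).arctan).div_const 4).pow (n+1)).div_const
        ((n+1).factorial : ℝ)).const_mul (√π)
      refine (h1.sub h3).congr_deriv ?_
      have hp : (1 + r^4) ≠ 0 := by positivity
      have hp' : (1 + (r^2)^2) ≠ 0 := by positivity
      have h4 : (∫ u : ℝ, exp (-1 * u^2) * (u * xr n (r * u))) =
        r * (√π * ((arctan (r^2) / 4)^n / n.factorial)) / (2 * (1 + r^4)) := by
        rw [← h2]; exact (mul_div_cancel_left₀ _ (by positivity)).symm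
      rw [h4, Nat.factorial_succ]
      push_cast
      have hf : (n.factorial : ℝ) ≠ 0 := by positivity
      have hn : (n : ℝ) + 1 ≠ 0 := by positivity
      have : (1 + (r^2)^2) = 1 + r^4 := by ring
      rw [this]
      field_simp
      ring
    intro r
    have := is_const_of_deriv_eq_zero (fun t => (hd t).differentiableAt) (fun t => (hd t).deriv) r 0
    simp only [G, zero_mul, Zf_self_succ] at this
    have h0 : √π * ((arctan ((0:ℝ)^2) / 4)^(n+1) / (n+1).factorial) = 0 := by simp
    rw [h0] at this
    simp only [mul_zero, integral_zero, sub_zero] at this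
    unfold G
    linarith

lemma K_lim (n : ℕ) : Tendsto (Zf n 0) atTop (𝓝 ((π / 8)^n / n.factorial)) := by
  obtain ⟨C, hC, hK, -, L, hL⟩ := K_main n
  have hZc := Zf_cont n 0
  have h1 : Tendsto (G n) atTop (𝓝 (∫ u : ℝ, exp (-1 * u^2) * L)) := by
    refine tendsto_integral_filter_of_dominated_convergence (fun u => C * exp (-1 * u^2))
      (Eventually.of_forall fun r => by fun_prop) ?_
      ((integrable_exp_neg_mul_sq one_pos).const_mul C) ?_
    · refine Eventually.of_forall fun r => Eventually.of_forall fun u => ?_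
      rw [Real.norm_eq_abs, abs_mul, abs_of_pos (exp_pos _), mul_comm]
      gcongr; exact hK _
    · have hne : ∀ᵐ u : ℝ, u ≠ 0 := by
        simp [ae_iff]
      filter_upwards [hne] with u hu
      refine Tendsto.const_mul _ ?_
      have habs : ∀ t, Zf n 0 |t| = Zf n 0 t := fun t => by
        rcases abs_choice t with h | h <;> rw [h]
        exact K_even n t
      have : (fun r => Zf n 0 (r * u)) =ᶠ[atTop] (fun r => Zf n 0 (r * |u|)) := by
        filter_upwards [eventually_ge_atTop 0] with r hr
        rw [← habs, abs_mul, abs_of_nonneg hr]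
      rw [tendsto_congr' this]
      exact hL.comp (tendsto_id.atTop_mul_const (abs_pos.2 hu))
  have h2 : Tendsto (G n) atTop (𝓝 (√π * ((π / 2 / 4)^n / n.factorial))) := by
    have : G n = fun r => √π * ((arctan (r^2) / 4)^n / n.factorial) := funext (G_formula n)
    rw [this]
    have ha : Tendsto (fun r : ℝ => arctan (r^2)) atTop (𝓝 (π / 2)) :=
      (tendsto_nhds_of_tendsto_nhdsWithin tendsto_arctan_atTop).comp
        (tendsto_pow_atTop two_ne_zero)
    exact (((ha.div_const 4).pow n).div_const _).const_mul _
  have h3 := tendsto_nhds_unique h1 h2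
  rw [integral_mul_const, integral_gaussian, div_one] at h3
  have hp : √π ≠ 0 := by positivity
  have h4 := mul_left_cancel₀ hp h3
  rw [h4] at hL
  convert hL using 4
  ring

lemma Z_lim (n : ℕ) : Tendsto (fun T => Zf (n+1) (-T) T) atTop
    (𝓝 (2 / (n+1).factorial * (π / 4)^(n+1))) := by
  simp only [Zf_quad]
  have h : Tendsto (fun T => 2 * ∑ p ∈ Finset.HasAntidiagonal.antidiagonal (n+1),
      Zf p.1 0 T * Zf p.2 0 T) atTop (𝓝 (2 * ∑ p ∈ Finset.HasAntidiagonal.antidiagonal (n+1),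
      ((π / 8)^p.1 / p.1.factorial) * ((π / 8)^p.2 / p.2.factorial))) :=
    (tendsto_finsetSum _ fun p _ => (K_lim p.1).mul (K_lim p.2)).const_mul 2
  convert h using 2
  have h5 := (Commute.all (π / 8) (π / 8)).add_pow' (n+1)
  have h6 : π / 8 + π / 8 = π / 4 := by ring
  rw [h6] at h5
  rw [h5, div_mul_eq_mul_div, mul_div_assoc, Finset.sum_div]
  congr 1
  apply Finset.sum_congr rfl
  intro p hp
  have hpn : p.1 + p.2 = n + 1 := by simpa using hp
  rw [← hpn, nsmul_eq_mul]
  have := Nat.add_choose_mul_factorial_mul_factorial p.1 p.2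
  rw [← Nat.choose_symm_add] at this
  have h7 : (((p.1 + p.2).choose p.1 : ℕ) : ℝ) * p.1.factorial * p.2.factorial
    = (p.1 + p.2).factorial := by exact_mod_cast this
  rw [← h7]
  have h8 : (((p.1 + p.2).choose p.1 : ℕ) : ℝ) ≠ 0 := by
    have := Nat.choose_pos (Nat.le_add_right p.1 p.2)
    positivity
  field_simp

end LZ

namespace LZ

def spx (m : ℕ) (a t : ℝ) : Set (Fin m → ℝ) :=
  {s | (∀ i j : Fin m, i ≤ j → s j ≤ s i) ∧ ∀ i, a ≤ s i ∧ s i ≤ t}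

lemma spx_closed (m : ℕ) (a t : ℝ) : IsClosed (spx m a t) := by
  have : spx m a t = (⋂ i, ⋂ j, ⋂ (_ : i ≤ j), {s | s j ≤ s i}) ∩
      ⋂ i, ({s | a ≤ s i} ∩ {s | s i ≤ t}) := by
    ext s; simp [spx]
  rw [this]
  refine IsClosed.inter ?_ ?_
  · exact isClosed_iInter fun i => isClosed_iInter fun j => isClosed_iInter fun _ =>
      isClosed_le (by fun_prop) (by fun_prop)
  · exact isClosed_iInter fun i => (isClosed_le (by fun_prop) (by fun_prop)).inter
      (isClosed_le (by fun_prop) (by fun_prop))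

lemma spx_compact (m : ℕ) (a t : ℝ) : IsCompact (spx m a t) :=
  (isCompact_Icc (a := fun _ : Fin m => a) (b := fun _ => t)).of_isClosed_subset
    (spx_closed m a t) (fun _ hs => ⟨fun i => (hs.2 i).1, fun i => (hs.2 i).2⟩)

lemma mem_cons (m : ℕ) (a t u : ℝ) (s : Fin m → ℝ) :
    (Fin.cons u s : Fin (m+1) → ℝ) ∈ spx (m+1) a t ↔ u ∈ Set.Icc a t ∧ s ∈ spx m a u := by
  simp only [spx, Set.mem_ofPred_eq, Fin.forall_fin_succ, Fin.cons_zero, Fin.cons_succ,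
    Fin.succ_le_succ_iff, Set.mem_Icc]
  constructor
  · rintro ⟨⟨⟨-, h1⟩, h2⟩, ⟨h3, h4⟩⟩
    exact ⟨h3, fun i j hij => (h2 i).2 j hij, fun i => ⟨(h4 i).1, h1 i (Fin.zero_le _)⟩⟩
  · rintro ⟨h1, h2, h3⟩
    refine ⟨⟨⟨fun _ => le_rfl, fun i _ => (h3 i).2⟩, fun i => ⟨fun h => ?_, fun j hij => h2 i j hij⟩⟩,
      h1, fun i => ⟨(h3 i).1, (h3 i).2.trans h1.2⟩⟩
    exact absurd h (by simp)

lemma peel (m : ℕ) {a t : ℝ} (hat : a ≤ t) {F : (Fin (m+1) → ℝ) → ℝ} (hF : Continuous F) :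
    ∫ s in spx (m+1) a t, F s = ∫ u in a..t, ∫ s in spx m a u, F (Fin.cons u s) := by
  have hmp := (volume_preserving_piFinSuccAbove (fun _ : Fin (m + 1) => ℝ) 0).symm
  have he : ∀ p : ℝ × (Fin m → ℝ),
      (MeasurableEquiv.piFinSuccAbove (fun _ : Fin (m + 1) => ℝ) 0).symm p
        = (Fin.cons p.1 p.2 : Fin (m+1) → ℝ) := by
    intro p
    simp [MeasurableEquiv.piFinSuccAbove_symm_apply, Fin.insertNthEquiv]
  have hmeas : MeasurableSet (spx (m+1) a t) := (spx_closed _ _ _).measurableSet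
  have hint : Integrable ((spx (m+1) a t).indicator F) :=
    (hF.continuousOn.integrableOn_compact (spx_compact _ _ _)).integrable_indicator hmeas
  rw [← integral_indicator hmeas, ← hmp.integral_comp (MeasurableEquiv.measurableEmbedding _)]
  have hint2 := (hmp.integrable_comp_emb (MeasurableEquiv.measurableEmbedding _)).2 hint
  rw [Measure.volume_eq_prod] at hint2 ⊢
  refine (integral_prod _ hint2).trans ?_
  rw [intervalIntegral.integral_of_le hat, ← integral_Icc_eq_integral_Ioc,
    ← integral_indicator measurableSet_Icc]
  congr 1
  ext u
  by_cases hu : u ∈ Set.Icc a t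
  · rw [Set.indicator_of_mem hu, ← integral_indicator (spx_closed _ _ _).measurableSet]
    congr 1
    ext s
    rw [Function.comp_apply, he]
    by_cases hs : s ∈ spx m a u
    · rw [Set.indicator_of_mem hs, Set.indicator_of_mem ((mem_cons _ _ _ _ _).2 ⟨hu, hs⟩)]
    · rw [Set.indicator_of_notMem hs, Set.indicator_of_notMem fun h => hs ((mem_cons _ _ _ _ _).1 h).2]
  · rw [Set.indicator_of_notMem hu]
    have : ∀ s, (spx (m+1) a t).indicator F
      ((MeasurableEquiv.piFinSuccAbove (fun _ : Fin (m + 1) => ℝ) 0).symm (u, s)) = 0 := by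
      intro s
      rw [he, Set.indicator_of_notMem fun h => hu ((mem_cons _ _ _ _ _).1 h).1]
    simp only [Function.comp_apply, this, integral_zero]

lemma idx_zero {n : ℕ} (k : Fin n) : 2 * k.1 < 2 * n := by have := k.isLt; omega
lemma idx_one {n : ℕ} (k : Fin n) : 2 * k.1 + 1 < 2 * n := by have := k.isLt; omega

noncomputable def Fn (n : ℕ) (s : Fin (2 * n) → ℝ) : ℝ :=
  ∏ k : Fin n,
    Real.cos ((s ⟨2 * k.1, idx_zero k⟩) ^ 2 -
      (s ⟨2 * k.1 + 1, idx_one k⟩) ^ 2)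

lemma Fn_cont (n : ℕ) : Continuous (Fn n) := by
  unfold Fn; fun_prop

lemma Fn_succ (n : ℕ) (u v : ℝ) (s : Fin (2 * n) → ℝ) :
    Fn (n+1) (Fin.cons (α := fun _ => ℝ) u (Fin.cons (α := fun _ => ℝ) v s : Fin (2*n+1) → ℝ) : Fin (2*n+1+1) → ℝ)
      = cos (u^2 - v^2) * Fn n s := by
  unfold Fn
  rw [Fin.prod_univ_succ]
  rfl

lemma simplex_eq (n : ℕ) : ∀ {a t : ℝ}, a ≤ t → ∫ s in spx (2 * n) a t, Fn n s = Zf n a t := by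
  induction n with
  | zero =>
    intro a t hat
    have : spx (2 * 0) a t = Set.univ := by
      ext s; simp only [spx, Set.mem_ofPred_eq, Set.mem_univ, iff_true]
      exact ⟨fun i => i.elim0, fun i => i.elim0⟩
    rw [this, Zf_zero]
    have hF : ∀ s, Fn 0 s = 1 := fun s => by simp [Fn]
    have hv : (volume : Measure (Fin (2 * 0) → ℝ)).real Set.univ = 1 := by
      rw [Measure.real, volume_pi]
      show ((Measure.pi fun _ : Fin 0 => (volume : Measure ℝ)) Set.univ).toReal = 1
      rw [Measure.pi_univ]; simp
    simp only [hF]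
    rw [setIntegral_const, hv]; simp
  | succ n ih =>
    intro a t hat
    have h1 := peel (2 * n + 1) hat (F := Fn (n+1)) (Fn_cont (n+1))
    refine h1.trans ?_
    rw [Zf_succ]
    apply intervalIntegral.integral_congr
    intro u hu
    rw [Set.uIcc_of_le hat] at hu
    have hc : Continuous fun s : Fin (2*n+1) → ℝ => Fn (n+1) (Fin.cons (α := fun _ => ℝ) u s : Fin (2*n+1+1) → ℝ) :=
      (Fn_cont (n+1)).comp (by fun_prop)
    have h2 := peel (2 * n) hu.1 hc
    refine h2.trans ?_
    have hZ := Zf_cont n a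
    have e : ∫ v in a..u, ∫ s in spx (2*n) a v,
        Fn (n+1) (Fin.cons (α := fun _ => ℝ) u (Fin.cons (α := fun _ => ℝ) v s : Fin (2*n+1) → ℝ) : Fin (2*n+1+1) → ℝ)
        = ∫ v in a..u, (cos (u^2) * (cos (v^2) * Zf n a v) + sin (u^2) * (sin (v^2) * Zf n a v)) := by
      apply intervalIntegral.integral_congr
      intro v hv
      rw [Set.uIcc_of_le hu.1] at hv
      simp only [Fn_succ]
      rw [integral_const_mul, ih hv.1, cos_sub]
      ring
    refine e.trans ?_
    rw [intervalIntegral.integral_add, intervalIntegral.integral_const_mul,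
      intervalIntegral.integral_const_mul]
    · rfl
    · exact Continuous.intervalIntegrable (by fun_prop) _ _
    · exact Continuous.intervalIntegrable (by fun_prop) _ _

end LZ

/-- For every positive integer `n`, the iterated improper integral
`I_n = ∫_{-∞}^{∞} ds₁ ∫_{-∞}^{s₁} ds₂ ⋯ ∫_{-∞}^{s_{2n-1}} ds_{2n}
  cos(s₁² − s₂²)·cos(s₃² − s₄²) ⋯ cos(s_{2n-1}² − s_{2n}²)`,
understood as the limit as `T → ∞` of the integral over the simplex
`{(s₁,…,s_{2n}) : −T ≤ s_{2n} ≤ ⋯ ≤ s₁ ≤ T}` of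
`∏_{k=1}^{n} cos(s_{2k−1}² − s_{2k}²)`, converges and equals `(2/n!)·(π/4)ⁿ`. -/
theorem In_eq (n : ℕ) (hn : 0 < n) :
    Tendsto (fun T : ℝ =>
        ∫ s in {s : Fin (2 * n) → ℝ |
            (∀ i j : Fin (2 * n), i ≤ j → s j ≤ s i) ∧ ∀ i, -T ≤ s i ∧ s i ≤ T},
          ∏ k : Fin n,
            Real.cos ((s ⟨2 * k.1, by have := k.isLt; omega⟩) ^ 2 -
              (s ⟨2 * k.1 + 1, by have := k.isLt; omega⟩) ^ 2))
      atTop (𝓝 (2 / n.factorial * (π / 4) ^ n)) := by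
  obtain ⟨m, rfl⟩ : ∃ m, n = m + 1 := ⟨n - 1, by omega⟩
  refine (LZ.Z_lim m).congr' ?_
  filter_upwards [eventually_ge_atTop 0] with T hT
  exact (LZ.simplex_eq (m+1) (by linarith)).symm
end

section
/- The iterated improper integral I₂ = ∫_{-∞}^{∞} ds₁ ∫_{-∞}^{s₁} ds₂ ∫_{-∞}^{s₂} ds₃ ∫_{-∞}^{s₃} ds₄ cos(s₁² − s₂²)·cos(s₃² − s₄²) converges and equals π²/16. -/
open Real MeasureTheory Filter Topology intervalIntegral

noncomputable def aE (a : ℂ) (r : ℝ) : ℂ := Complex.exp (-(r:ℂ)^2 + a * r)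

noncomputable def phi (a : ℂ) : ℂ := ∫ r in Set.Ioi (0:ℝ), aE a r

lemma aE_integrable (a : ℂ) : Integrable (aE a) := by
  have := integrable_cexp_quadratic (b := 1) (by simp) a 0
  refine this.congr (ae_of_all _ fun r => ?_)
  simp [aE]

lemma aE_norm (a : ℂ) (r : ℝ) : ‖aE a r‖ = Real.exp (-r^2 + a.re * r) := by
  have : (-(r:ℂ)^2 + a * r).re = -r^2 + a.re * r := by
    simp [pow_two]
  rw [aE, Complex.norm_exp, this]

lemma aE_dom (b : ℂ) (B r : ℝ) (hr : 0 < r) (h : b.re ≤ B) :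
    ‖(r:ℂ) * aE b r‖ ≤ ‖aE (B + 1 : ℝ) r‖ := by
  rw [norm_mul, aE_norm, aE_norm, Complex.norm_real, Real.norm_eq_abs, abs_of_pos hr]
  have h1 : r ≤ Real.exp r := by linarith [Real.add_one_le_exp r]
  calc r * Real.exp (-r^2 + b.re * r) ≤ Real.exp r * Real.exp (-r^2 + B * r) := by gcongr
    _ = _ := by rw [← Real.exp_add]; congr 1; simp; ring

lemma aE_continuous (a : ℂ) : Continuous (aE a) := by unfold aE; fun_prop

lemma raE_integrableOn (a : ℂ) : IntegrableOn (fun r : ℝ => (r:ℂ) * aE a r) (Set.Ioi 0) := by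
  refine Integrable.mono ((aE_integrable (a.re + 1 : ℝ)).integrableOn (s := Set.Ioi 0)) ?_ ?_
  · exact ((by fun_prop : Continuous fun r : ℝ => (r:ℂ)).mul (aE_continuous a)).aestronglyMeasurable
  · refine (ae_restrict_iff' measurableSet_Ioi).2 (ae_of_all _ fun r hr => ?_)
    exact aE_dom a a.re r hr le_rfl

lemma phi_hasDerivAt0 (a : ℂ) :
    HasDerivAt phi (∫ r in Set.Ioi (0:ℝ), (r:ℂ) * aE a r) a := by
  refine (_root_.hasDerivAt_integral_of_dominated_loc_of_deriv_le
    (μ := volume.restrict (Set.Ioi (0:ℝ))) (F := fun a r => aE a r)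
    (F' := fun a r => (r:ℂ) * aE a r) (bound := fun r => ‖aE (a.re + 1 + 1 : ℝ) r‖)
    (s := Metric.ball a 1) (Metric.ball_mem_nhds a one_pos) ?_ ?_ ?_ ?_ ?_ ?_).2
  · exact Eventually.of_forall fun b => (aE_continuous b).aestronglyMeasurable
  · exact (aE_integrable a).integrableOn
  · exact ((by fun_prop : Continuous fun r : ℝ => (r:ℂ)).mul (aE_continuous a)).aestronglyMeasurable
  · refine (ae_restrict_iff' measurableSet_Ioi).2 (ae_of_all _ fun r hr b hb => ?_)
    refine aE_dom b (a.re + 1) r hr ?_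
    have := Complex.abs_re_le_norm (b - a)
    rw [mem_ball_iff_norm] at hb
    have h2 := le_abs_self (b - a).re
    simp at h2 this
    linarith
  · exact (aE_integrable _).integrableOn.norm
  · refine ae_of_all _ fun r b _ => ?_
    have : HasDerivAt (fun b : ℂ => -(r:ℂ)^2 + b * r) (r:ℂ) b := by
      simpa using ((hasDerivAt_id b).mul_const (r:ℂ)).const_add (-(r:ℂ)^2)
    have := this.cexp
    rw [mul_comm] at this
    exact this

lemma aE_hasDerivAt (a : ℂ) (r : ℝ) : HasDerivAt (aE a) (a * aE a r - 2 * (r * aE a r)) r := by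
  have h0 : HasDerivAt (fun r : ℝ => (r:ℂ)) 1 r := Complex.ofRealCLM.hasDerivAt
  have := (((h0.pow 2).neg).add (h0.const_mul a)).cexp
  refine this.congr_deriv ?_
  simp [aE]; ring

lemma phi_ode (a : ℂ) : (∫ r in Set.Ioi (0:ℝ), (r:ℂ) * aE a r) = (1 + a * phi a) / 2 := by
  have i1 := (aE_integrable a).integrableOn (s := Set.Ioi 0)
  have i2 := raE_integrableOn a
  have i3 : IntegrableOn (fun r : ℝ => a * aE a r - 2 * (r * aE a r)) (Set.Ioi 0) :=
    (i1.const_mul a).sub (i2.const_mul 2)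
  have ht := tendsto_zero_of_hasDerivAt_of_integrableOn_Ioi (a := 0)
    (fun r _ => aE_hasDerivAt a r) i3 i1
  have := integral_Ioi_of_hasDerivAt_of_tendsto (aE_continuous a).continuousWithinAt
    (fun r _ => aE_hasDerivAt a r) i3 ht
  rw [MeasureTheory.integral_sub (i1.const_mul a) (i2.const_mul 2), MeasureTheory.integral_const_mul,
    MeasureTheory.integral_const_mul] at this
  change a * phi a - _ = _ at this
  have h0 : aE a 0 = 1 := by simp [aE]
  rw [h0] at this
  linear_combination -this / 2

lemma phi_hasDerivAt (a : ℂ) : HasDerivAt phi ((1 + a * phi a) / 2) a := by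
  rw [← phi_ode]; exact phi_hasDerivAt0 a

lemma phi_conj (a : ℂ) : phi ((starRingEnd ℂ) a) = (starRingEnd ℂ) (phi a) := by
  unfold phi
  rw [← integral_conj]
  congr 1; ext r
  simp [aE, ← Complex.exp_conj]

lemma phi_zero : phi 0 = (√π / 2 : ℝ) := by
  have := integral_gaussian_Ioi 1
  simp only [div_one] at this
  rw [← this, phi, ← integral_complex_ofReal]
  congr 1; ext r
  simp [aE]

lemma phi_bound1 (a : ℂ) (ha : a.re ≤ 0) : ‖phi a‖ ≤ √π / 2 := by
  have := integral_gaussian_Ioi 1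
  simp only [div_one] at this
  rw [← this]
  refine norm_integral_le_of_norm_le ((integrable_exp_neg_mul_sq one_pos).integrableOn) ?_
  refine (ae_restrict_iff' measurableSet_Ioi).2 (ae_of_all _ fun r hr => ?_)
  rw [aE_norm, Real.exp_le_exp]
  have : 0 < r := hr
  nlinarith

lemma phi_bound2 (a : ℂ) (ha : a.re < 0) : ‖phi a‖ ≤ 1 / (-a.re) := by
  have := integral_exp_mul_Ioi ha 0
  have e : 1 / (-a.re) = ∫ x in Set.Ioi (0:ℝ), Real.exp (a.re * x) := by
    rw [this]; simp [neg_div]; 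
  rw [e]
  refine norm_integral_le_of_norm_le (integrableOn_exp_mul_Ioi ha 0) ?_
  refine (ae_restrict_iff' measurableSet_Ioi).2 (ae_of_all _ fun r hr => ?_)
  rw [aE_norm, Real.exp_le_exp]
  have : 0 < r := hr
  nlinarith

noncomputable def om : ℂ := ((√2 / 2 : ℝ) : ℂ) * (1 + Complex.I)

lemma om_sq : om * om = Complex.I := by
  have h : ((√2 / 2 : ℝ) : ℂ) * ((√2 / 2 : ℝ) : ℂ) = 1 / 2 := by
    rw [← Complex.ofReal_mul]
    have : √2 / 2 * (√2 / 2) = 1 / 2 := by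
      nlinarith [Real.mul_self_sqrt (show (0:ℝ) ≤ 2 by norm_num)]
    rw [this]; simp
  unfold om
  linear_combination ((1 + Complex.I)^2) * h + Complex.I_sq / 2

lemma om_conj : (starRingEnd ℂ) om = - Complex.I * om := by
  unfold om
  simp only [map_mul, Complex.conj_ofReal, map_add, map_one, Complex.conj_I]
  linear_combination (((√2 / 2 : ℝ) : ℂ)) * Complex.I_sq

lemma om_norm : ‖om‖ = 1 := by
  have h := congrArg norm om_sq
  rw [norm_mul, Complex.norm_I] at h
  nlinarith [norm_nonneg om]

noncomputable def gg (z : ℂ) : ℂ := om * phi (2 * Complex.I * om * z)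

lemma gg_hasDerivAt (z : ℂ) : HasDerivAt gg (-1 - 2 * Complex.I * z * gg z) z := by
  have h1 : HasDerivAt (fun z : ℂ => 2 * Complex.I * om * z) (2 * Complex.I * om) z := by
    simpa using (hasDerivAt_id z).const_mul (2 * Complex.I * om)
  have := ((phi_hasDerivAt (2 * Complex.I * om * z)).comp z h1).const_mul om
  refine this.congr_deriv ?_
  unfold gg
  linear_combination (Complex.I + Complex.I * (2 * Complex.I * om * z) *
    phi (2 * Complex.I * om * z)) * om_sq + (1 + 2 * Complex.I * om * z *
    phi (2 * Complex.I * om * z)) * Complex.I_sq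

lemma gg_arg_re (z : ℂ) : (2 * Complex.I * om * z).re = - (√2 * (z.re + z.im)) := by
  simp [om]; ring

lemma gg_bound1 (z : ℂ) (h : 0 ≤ z.re + z.im) : ‖gg z‖ ≤ √π / 2 := by
  rw [gg, norm_mul, om_norm, one_mul]
  apply phi_bound1
  rw [gg_arg_re]
  have := Real.sqrt_nonneg 2
  nlinarith [mul_nonneg this h]

lemma gg_bound2 (z : ℂ) (h : 0 < z.re + z.im) : ‖gg z‖ ≤ 1 / (z.re + z.im) := by
  rw [gg, norm_mul, om_norm, one_mul]
  have h2 : 1 ≤ √2 := by rw [Real.one_le_sqrt]; norm_num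
  have h3 : (2 * Complex.I * om * z).re < 0 := by
    rw [gg_arg_re]; have : 0 < √2 * (z.re + z.im) := by positivity
    linarith
  refine (phi_bound2 _ h3).trans ?_
  rw [gg_arg_re, neg_neg]
  apply one_div_le_one_div_of_le h
  nlinarith

lemma gg_symm (z : ℂ) : gg (Complex.I * (starRingEnd ℂ) z) = Complex.I * (starRingEnd ℂ) (gg z) := by
  unfold gg
  rw [map_mul, ← phi_conj, om_conj]
  simp only [map_mul, om_conj, Complex.conj_I, map_ofNat]
  have e : 2 * Complex.I * om * (Complex.I * (starRingEnd ℂ) z) =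
    2 * -Complex.I * (-Complex.I * om) * (starRingEnd ℂ) z := by ring
  rw [e]
  linear_combination (om * phi (2 * -Complex.I * (-Complex.I * om) * (starRingEnd ℂ) z)) * Complex.I_sq

lemma gg_zero : gg 0 = om * (√π / 2 : ℝ) := by
  simp only [gg, mul_zero, phi_zero]

noncomputable def ff (z : ℂ) : ℂ := Complex.exp (Complex.I * z ^ 2) * gg z ^ 2

lemma gg_diff : Differentiable ℂ gg := fun z => (gg_hasDerivAt z).differentiableAt

lemma ff_diff : Differentiable ℂ ff := by
  have := gg_diff
  unfold ff
  fun_prop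

lemma ff_symm (z : ℂ) : ff (Complex.I * (starRingEnd ℂ) z) = - (starRingEnd ℂ) (ff z) := by
  unfold ff
  rw [gg_symm, map_mul, ← Complex.exp_conj]
  simp only [map_mul, map_pow, Complex.conj_I]
  rw [show Complex.I * (Complex.I * (starRingEnd ℂ) z) ^ 2 = -Complex.I * (starRingEnd ℂ) z ^ 2 by
    linear_combination (Complex.I * (starRingEnd ℂ) z ^ 2) * Complex.I_sq]
  linear_combination (Complex.exp (-Complex.I * (starRingEnd ℂ) z ^ 2) * (starRingEnd ℂ) (gg z) ^ 2)
    * Complex.I_sq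

lemma ff_bound (z : ℂ) (h1 : 0 ≤ z.re) (h2 : 0 ≤ z.im) : ‖ff z‖ ≤ ‖gg z‖ ^ 2 := by
  unfold ff
  rw [norm_mul, norm_pow, Complex.norm_exp]
  have : Real.exp (Complex.I * z ^ 2).re ≤ 1 := by
    rw [Real.exp_le_one_iff]
    simp [pow_two]
    nlinarith [mul_nonneg h1 h2]
  nlinarith [sq_nonneg ‖gg z‖]

lemma ff_bound' (z : ℂ) (R : ℝ) (hR : 0 < R) (h1 : 0 ≤ z.re) (h2 : 0 ≤ z.im)
    (h : R ≤ z.re + z.im) : ‖ff z‖ ≤ 1 / R ^ 2 := by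
  refine (ff_bound z h1 h2).trans ?_
  have h3 := gg_bound2 z (hR.trans_le h)
  have h4 : ‖gg z‖ ≤ 1 / R := h3.trans (one_div_le_one_div_of_le hR h)
  calc ‖gg z‖ ^ 2 ≤ (1 / R) ^ 2 := by gcongr
    _ = _ := by ring

lemma K_bound (R : ℝ) (hR : 0 < R) :
    |((starRingEnd ℂ) om * ∫ x in (0:ℝ)..R, ff x).re| ≤ 1 / R := by
  have h := Complex.integral_boundary_rect_eq_zero_of_differentiableOn ff 0 (R + R * Complex.I)
    ff_diff.differentiableOn
  simp only [Complex.zero_re, Complex.zero_im, Complex.add_re, Complex.add_im, Complex.ofReal_re,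
    Complex.ofReal_im, Complex.mul_re, Complex.mul_im, Complex.I_re, Complex.I_im, mul_zero, mul_one,
    sub_zero, add_zero, zero_add, Complex.ofReal_zero, zero_mul, smul_eq_mul] at h
  have hs : (∫ y in (0:ℝ)..R, ff (y * Complex.I)) = - (starRingEnd ℂ) (∫ x in (0:ℝ)..R, ff x) := by
    rw [← intervalIntegral_conj, ← intervalIntegral.integral_neg]
    congr 1; ext y
    rw [← ff_symm]; simp [mul_comm]
  rw [hs] at h
  set K := ∫ x in (0:ℝ)..R, ff x
  have b1 : ‖∫ x in (0:ℝ)..R, ff (x + R * Complex.I)‖ ≤ 1 / R ^ 2 * |R - 0| := by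
    refine intervalIntegral.norm_integral_le_of_norm_le_const fun x hx => ?_
    rw [Set.uIoc_of_le hR.le] at hx
    apply ff_bound' _ R hR <;> simp <;> linarith [hx.1]
  have b2 : ‖∫ y in (0:ℝ)..R, ff (R + y * Complex.I)‖ ≤ 1 / R ^ 2 * |R - 0| := by
    refine intervalIntegral.norm_integral_le_of_norm_le_const fun x hx => ?_
    rw [Set.uIoc_of_le hR.le] at hx
    apply ff_bound' _ R hR <;> simp <;> linarith [hx.1]
  have e0 : 1 / R ^ 2 * |R - 0| = 1 / R := by
    rw [sub_zero, abs_of_pos hR]; field_simp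
  rw [e0] at b1 b2
  set A := ∫ x in (0:ℝ)..R, ff (x + R * Complex.I)
  set B := ∫ y in (0:ℝ)..R, ff (R + y * Complex.I)
  have h5 : (((2 * ((starRingEnd ℂ) om * K).re : ℝ)) : ℂ) = (starRingEnd ℂ) om * (A - Complex.I * B) := by
    have : (((2 * ((starRingEnd ℂ) om * K).re : ℝ)) : ℂ) =
      (starRingEnd ℂ) om * K + om * (starRingEnd ℂ) K := by
      rw [← Complex.add_conj, map_mul, Complex.conj_conj]
    rw [this, om_conj]
    linear_combination (-Complex.I * om) * h + om * (starRingEnd ℂ) K * Complex.I_sq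
  have h6 := congrArg norm h5
  rw [norm_mul, RCLike.norm_conj, om_norm, one_mul, Complex.norm_real, Real.norm_eq_abs, abs_mul] at h6
  have h7 : ‖A - Complex.I * B‖ ≤ 1 / R + 1 / R := by
    refine (norm_sub_le _ _).trans ?_
    rw [norm_mul, Complex.norm_I, one_mul]
    linarith
  rw [abs_of_pos (by norm_num : (0:ℝ) < 2)] at h6
  linarith

noncomputable def GG (s : ℝ) : ℂ := Complex.exp (Complex.I * (s:ℂ) ^ 2) * gg s

lemma GG_hasDerivAt (s : ℝ) : HasDerivAt GG (-Complex.exp (Complex.I * (s:ℂ) ^ 2)) s := by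
  have h1 : HasDerivAt (fun z : ℂ => Complex.I * z ^ 2) (Complex.I * (2 * s)) (s:ℂ) := by
    simpa using ((hasDerivAt_id (s:ℂ)).pow 2).const_mul Complex.I
  have h2 := (h1.cexp.mul (gg_hasDerivAt (s:ℂ))).comp_ofReal
  refine h2.congr_deriv ?_
  ring

lemma GG_cont : Continuous GG := continuous_iff_continuousAt.2 fun s => (GG_hasDerivAt s).continuousAt

lemma expI_norm (s : ℝ) : ‖Complex.exp (Complex.I * (s:ℂ) ^ 2)‖ = 1 := by
  rw [← Complex.ofReal_pow, mul_comm, Complex.norm_exp_ofReal_mul_I]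

lemma expI_norm' (s : ℝ) : ‖Complex.exp (-(Complex.I * (s:ℂ) ^ 2))‖ = 1 := by
  rw [Complex.exp_neg, norm_inv, expI_norm, inv_one]

lemma GG_norm (s : ℝ) : ‖GG s‖ = ‖gg s‖ := by
  rw [GG, norm_mul, expI_norm, one_mul]

lemma GG_le_one (s : ℝ) (hs : 0 ≤ s) : ‖GG s‖ ≤ 1 := by
  rw [GG_norm]
  refine (gg_bound1 s (by simpa using hs)).trans ?_
  have : √π ≤ 2 := by
    rw [Real.sqrt_le_left (by norm_num)]; linarith [Real.pi_le_four]
  linarith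

lemma GG_le_inv (s : ℝ) (hs : 0 < s) : ‖GG s‖ ≤ 1 / s := by
  rw [GG_norm]
  simpa using gg_bound2 s (by simpa using hs)

lemma GG_le (s : ℝ) (hs : 0 ≤ s) : ‖GG s‖ ≤ 2 * (1 + s)⁻¹ := by
  rw [← div_eq_mul_inv, le_div_iff₀ (by linarith)]
  have h1 := GG_le_one s hs
  have h2 : ‖GG s‖ * s ≤ 1 := by
    rcases hs.eq_or_lt with h | h
    · rw [← h]; simp
    · have := GG_le_inv s h
      rwa [le_div_iff₀ h] at this
  linarith

lemma GG_zero : GG 0 = om * (√π / 2 : ℝ) := by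
  simp [GG, gg_zero]

lemma GG_tendsto : Tendsto GG atTop (𝓝 0) := by
  rw [tendsto_zero_iff_norm_tendsto_zero]
  refine squeeze_zero' (Eventually.of_forall fun _ => norm_nonneg _)
    ((eventually_gt_atTop 0).mono fun s hs => GG_le_inv s hs) ?_
  exact tendsto_const_nhds.div_atTop tendsto_id

/-- integrand of the error term -/
noncomputable def EE (T s : ℝ) : ℂ :=
  (starRingEnd ℂ) (GG 0 - GG T) * (GG s - GG T) ^ 2 * Complex.exp (-(Complex.I * (s:ℂ) ^ 2))

lemma EE_cont (T : ℝ) : Continuous (EE T) := by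
  have := GG_cont
  unfold EE; fun_prop

lemma ff_eq (s : ℝ) : ff s = GG s ^ 2 * Complex.exp (-(Complex.I * (s:ℂ) ^ 2)) := by
  rw [ff, GG, Complex.exp_neg]
  field_simp [Complex.exp_ne_zero]

lemma EE_diff_bound (T s : ℝ) (hT : 0 < T) (hs : 0 ≤ s) :
    ‖EE T s - (starRingEnd ℂ) (GG 0) * ff s‖ ≤ 10 / T * (1 + s)⁻¹ + 2 / T ^ 2 := by
  have e : EE T s - (starRingEnd ℂ) (GG 0) * ff s =
      (-((starRingEnd ℂ) (GG T) * GG s ^ 2) + (starRingEnd ℂ) (GG 0 - GG T) *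
        (-(2 * (GG T * GG s)) + GG T ^ 2)) * Complex.exp (-(Complex.I * (s:ℂ) ^ 2)) := by
    rw [ff_eq, EE, map_sub]; ring
  rw [e, norm_mul, expI_norm', mul_one]
  have h0 := GG_le_one 0 le_rfl
  have hT1 := GG_le_one T hT.le
  have hT2 := GG_le_inv T hT
  have hs1 := GG_le_one s hs
  have hs2 := GG_le s hs
  have n0 := norm_nonneg (GG s)
  have n1 := norm_nonneg (GG T)
  have b1 : ‖-((starRingEnd ℂ) (GG T) * GG s ^ 2)‖ ≤ ‖GG T‖ * ‖GG s‖ := by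
    rw [norm_neg, norm_mul, RCLike.norm_conj, norm_pow]
    gcongr
    nlinarith
  have b2 : ‖(starRingEnd ℂ) (GG 0 - GG T)‖ ≤ 2 := by
    rw [RCLike.norm_conj]
    exact (norm_sub_le _ _).trans (by linarith)
  have b3 : ‖-(2 * (GG T * GG s)) + GG T ^ 2‖ ≤ 2 * (‖GG T‖ * ‖GG s‖) + ‖GG T‖ ^ 2 := by
    refine (norm_add_le _ _).trans ?_
    rw [norm_neg, norm_mul, norm_mul, norm_pow]; simp
  have b4 : ‖GG T‖ * ‖GG s‖ ≤ 1 / T * (2 * (1 + s)⁻¹) := by gcongr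
  have b5 : ‖GG T‖ ^ 2 ≤ (1 / T) ^ 2 := by gcongr
  calc _ ≤ ‖GG T‖ * ‖GG s‖ + 2 * (2 * (‖GG T‖ * ‖GG s‖) + ‖GG T‖ ^ 2) := by
        refine (norm_add_le _ _).trans (add_le_add b1 ?_)
        rw [norm_mul]
        gcongr
    _ ≤ 5 * (1 / T * (2 * (1 + s)⁻¹)) + 2 * (1 / T) ^ 2 := by linarith
    _ = _ := by ring

lemma integral_inv_one_add (T : ℝ) (hT : 0 < T) :
    ∫ s in (0:ℝ)..T, (1 + s)⁻¹ = Real.log (1 + T) := by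
  rw [intervalIntegral.integral_comp_add_left (fun x : ℝ => x⁻¹), integral_inv_of_pos
    (by linarith) (by linarith)]
  simp

lemma EE_bound (T : ℝ) (hT : 0 < T) :
    |(∫ s in (0:ℝ)..T, EE T s).re| ≤ 10 * (Real.log (1 + T) / T) + 3 / T := by
  have hff : Continuous fun s : ℝ => (starRingEnd ℂ) (GG 0) * ff s :=
    continuous_const.mul (ff_diff.continuous.comp Complex.continuous_ofReal)
  have ic : ContinuousOn (fun s : ℝ => 10 / T * (1 + s)⁻¹) (Set.uIcc 0 T) := by
    apply ContinuousOn.mul continuousOn_const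
    apply ContinuousOn.inv₀ (by fun_prop)
    intro x hx
    rw [Set.uIcc_of_le hT.le] at hx
    linarith [hx.1]
  have d : ‖∫ s in (0:ℝ)..T, (EE T s - (starRingEnd ℂ) (GG 0) * ff s)‖ ≤
      ∫ s in (0:ℝ)..T, (10 / T * (1 + s)⁻¹ + 2 / T ^ 2) := by
    refine intervalIntegral.norm_integral_le_of_norm_le hT.le ?_ ?_
    · exact ae_of_all _ fun s hs => EE_diff_bound T s hT hs.1.le
    · exact (ic.add continuousOn_const).intervalIntegrable
  rw [intervalIntegral.integral_sub ((EE_cont T).intervalIntegrable _ _) (hff.intervalIntegrable _ _),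
    intervalIntegral.integral_add ic.intervalIntegrable
      (continuous_const.intervalIntegrable _ _),
    intervalIntegral.integral_const_mul, intervalIntegral.integral_const_mul,
    integral_inv_one_add T hT, intervalIntegral.integral_const, smul_eq_mul, sub_zero] at d
  have k := K_bound T hT
  have k2 : ((starRingEnd ℂ) (GG 0) * ∫ s in (0:ℝ)..T, ff s).re =
      √π / 2 * ((starRingEnd ℂ) om * ∫ s in (0:ℝ)..T, ff s).re := by
    rw [← Complex.re_ofReal_mul, GG_zero, map_mul, Complex.conj_ofReal]
    congr 1; ring
  have h1 := (Complex.abs_re_le_norm _).trans d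
  rw [Complex.sub_re, k2] at h1
  have : √π ≤ 2 := by
    rw [Real.sqrt_le_left (by norm_num)]; linarith [Real.pi_le_four]
  have k3 : |√π / 2 * ((starRingEnd ℂ) om * ∫ s in (0:ℝ)..T, ff s).re| ≤ 1 / T := by
    rw [abs_mul, abs_of_nonneg (by positivity)]
    nlinarith [abs_nonneg ((starRingEnd ℂ) om * ∫ s in (0:ℝ)..T, ff s).re]
  have e : 10 / T * Real.log (1 + T) + T * (2 / T ^ 2) + 1 / T =
      10 * (Real.log (1 + T) / T) + 3 / T := by
    field_simp; ring
  rw [← e]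
  rw [abs_le] at *
  constructor <;> linarith [h1.1, h1.2, k3.1, k3.2]

lemma log_lim : Tendsto (fun T : ℝ => Real.log (1 + T) / T) atTop (𝓝 0) := by
  have h := Real.isLittleO_log_id_atTop.tendsto_div_nhds_zero
  have h1 : Tendsto (fun T : ℝ => 1 + T) atTop atTop := tendsto_atTop_add_const_left _ _ tendsto_id
  have h2 := h.comp h1
  have h3 : Tendsto (fun T : ℝ => T⁻¹ + 1) atTop (𝓝 (0 + 1)) :=
    tendsto_inv_atTop_zero.add_const 1
  have h4 := h2.mul h3
  rw [zero_mul] at h4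
  refine h4.congr' ?_
  filter_upwards [eventually_gt_atTop 0] with T hT
  simp only [Function.comp, id]
  have : 1 + T ≠ 0 := by positivity
  field_simp

lemma EE_lim : Tendsto (fun T : ℝ => (∫ s in (0:ℝ)..T, EE T s).re) atTop (𝓝 0) := by
  rw [tendsto_zero_iff_abs_tendsto_zero]
  have hb : Tendsto (fun T : ℝ => 10 * (Real.log (1 + T) / T) + 3 / T) atTop (𝓝 (10 * 0 + 0)) :=
    (log_lim.const_mul 10).add (tendsto_const_nhds.div_atTop tendsto_id)
  simp only [mul_zero, add_zero] at hb
  exact squeeze_zero' (Eventually.of_forall fun _ => abs_nonneg _)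
    ((eventually_gt_atTop 0).mono fun T hT => EE_bound T hT) hb

noncomputable def PP (s : ℝ) : ℝ := ∫ x in (0:ℝ)..s, Real.cos (x ^ 2)
noncomputable def SS (s : ℝ) : ℝ := ∫ x in (0:ℝ)..s, Real.sin (x ^ 2)

lemma ftc_deriv (f : ℝ → ℝ) (hf : Continuous f) (a s : ℝ) :
    HasDerivAt (fun s => ∫ x in a..s, f x) (f s) s :=
  intervalIntegral.integral_hasDerivAt_right (hf.intervalIntegrable _ _)
    hf.aestronglyMeasurable.stronglyMeasurableAtFilter hf.continuousAt

lemma PP_deriv (s : ℝ) : HasDerivAt PP (Real.cos (s ^ 2)) s :=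
  ftc_deriv (fun x => Real.cos (x ^ 2)) (by fun_prop) 0 s

lemma SS_deriv (s : ℝ) : HasDerivAt SS (Real.sin (s ^ 2)) s :=
  ftc_deriv (fun x => Real.sin (x ^ 2)) (by fun_prop) 0 s

lemma PP_cont : Continuous PP := continuous_iff_continuousAt.2 fun s => (PP_deriv s).continuousAt
lemma SS_cont : Continuous SS := continuous_iff_continuousAt.2 fun s => (SS_deriv s).continuousAt

lemma PP_neg (s : ℝ) : PP (-s) = - PP s := by
  have := intervalIntegral.integral_comp_neg (a := 0) (b := s) (fun x : ℝ => Real.cos (x ^ 2))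
  simp only [neg_sq, neg_zero] at this
  rw [PP, PP, this, intervalIntegral.integral_symm]

lemma SS_neg (s : ℝ) : SS (-s) = - SS s := by
  have := intervalIntegral.integral_comp_neg (a := 0) (b := s) (fun x : ℝ => Real.sin (x ^ 2))
  simp only [neg_sq, neg_zero] at this
  rw [SS, SS, this, intervalIntegral.integral_symm]

lemma PP_zero : PP 0 = 0 := by simp [PP]
lemma SS_zero : SS 0 = 0 := by simp [SS]

noncomputable def QQ (T s : ℝ) : ℝ := ((PP s + PP T) ^ 2 + (SS s + SS T) ^ 2) / 2

lemma QQ_cont (T : ℝ) : Continuous (QQ T) := by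
  have := PP_cont
  have := SS_cont
  unfold QQ; fun_prop

lemma step1 (T s : ℝ) : ∫ x in (-T)..s, Real.cos (s ^ 2 - x ^ 2) =
    Real.cos (s ^ 2) * (PP s + PP T) + Real.sin (s ^ 2) * (SS s + SS T) := by
  have := intervalIntegral.integral_eq_sub_of_hasDerivAt (a := -T) (b := s)
    (f := fun x => Real.cos (s ^ 2) * PP x + Real.sin (s ^ 2) * SS x)
    (f' := fun x => Real.cos (s ^ 2 - x ^ 2))
    (fun x _ => by
      rw [Real.cos_sub]
      exact ((PP_deriv x).const_mul _).add ((SS_deriv x).const_mul _))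
    (Continuous.intervalIntegrable (by fun_prop) _ _)
  rw [this]; simp only [PP_neg, SS_neg]; ring

lemma step2 (T s : ℝ) : ∫ y in (-T)..s,
    (Real.cos (y ^ 2) * (PP y + PP T) + Real.sin (y ^ 2) * (SS y + SS T)) = QQ T s := by
  have h1 := PP_cont
  have h2 := SS_cont
  have := intervalIntegral.integral_eq_sub_of_hasDerivAt (a := -T) (b := s)
    (f := QQ T)
    (f' := fun y => Real.cos (y ^ 2) * (PP y + PP T) + Real.sin (y ^ 2) * (SS y + SS T))
    (fun y _ => by
      have := (((((PP_deriv y).add_const (PP T)).pow 2).add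
        (((SS_deriv y).add_const (SS T)).pow 2))).div_const 2
      refine this.congr_deriv ?_
      simp; ring)
    (Continuous.intervalIntegrable (by fun_prop) _ _)
  rw [this]; simp [QQ, PP_neg, SS_neg]

lemma step3 (Q : ℝ → ℝ) (hQ : Continuous Q) (T s : ℝ) :
    ∫ x in (-T)..s, Real.cos (s ^ 2 - x ^ 2) * Q x =
    Real.cos (s ^ 2) * (∫ x in (-T)..s, Real.cos (x ^ 2) * Q x) +
    Real.sin (s ^ 2) * (∫ x in (-T)..s, Real.sin (x ^ 2) * Q x) := by
  rw [← intervalIntegral.integral_const_mul, ← intervalIntegral.integral_const_mul,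
    ← intervalIntegral.integral_add (Continuous.intervalIntegrable (by fun_prop) _ _)
      (Continuous.intervalIntegrable (by fun_prop) _ _)]
  congr 1; ext x
  rw [Real.cos_sub]; ring

lemma step4 (Q : ℝ → ℝ) (hQ : Continuous Q) (T : ℝ) :
    ∫ s in (-T)..T, (Real.cos (s ^ 2) * (∫ x in (-T)..s, Real.cos (x ^ 2) * Q x) +
      Real.sin (s ^ 2) * (∫ x in (-T)..s, Real.sin (x ^ 2) * Q x)) =
    ∫ s in (-T)..T, (Real.cos (s ^ 2) * (PP T - PP s) + Real.sin (s ^ 2) * (SS T - SS s)) * Q s := by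
  have h1 := PP_cont
  have h2 := SS_cont
  have hA := ftc_deriv (fun x => Real.cos (x ^ 2) * Q x) (by fun_prop) (-T)
  have hB := ftc_deriv (fun x => Real.sin (x ^ 2) * Q x) (by fun_prop) (-T)
  set A : ℝ → ℝ := fun s => ∫ x in (-T)..s, Real.cos (x ^ 2) * Q x with hAd
  set B : ℝ → ℝ := fun s => ∫ x in (-T)..s, Real.sin (x ^ 2) * Q x with hBd
  have cA : Continuous A := continuous_iff_continuousAt.2 fun s => (hA s).continuousAt
  have cB : Continuous B := continuous_iff_continuousAt.2 fun s => (hB s).continuousAt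
  change ∫ s in (-T)..T, (Real.cos (s ^ 2) * A s + Real.sin (s ^ 2) * B s) = _
  have := intervalIntegral.integral_eq_sub_of_hasDerivAt (a := -T) (b := T)
    (f := fun s => (PP s - PP T) * A s + (SS s - SS T) * B s)
    (f' := fun s => (Real.cos (s ^ 2) * A s + Real.sin (s ^ 2) * B s) -
      (Real.cos (s ^ 2) * (PP T - PP s) + Real.sin (s ^ 2) * (SS T - SS s)) * Q s)
    (fun s _ => by
      have := (((PP_deriv s).sub_const (PP T)).mul (hA s)).add
        (((SS_deriv s).sub_const (SS T)).mul (hB s))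
      refine this.congr_deriv ?_
      ring)
    (Continuous.intervalIntegrable (by fun_prop) _ _)
  rw [intervalIntegral.integral_sub (Continuous.intervalIntegrable (by fun_prop) _ _)
    (Continuous.intervalIntegrable (by fun_prop) _ _)] at this
  have a0 : A (-T) = 0 := by simp [hAd]
  have b0 : B (-T) = 0 := by simp [hBd]
  rw [a0, b0] at this
  linarith

lemma step5 (k : ℝ → ℝ) (hk : Continuous k) (T : ℝ) :
    ∫ s in (-T)..T, k s = ∫ s in (0:ℝ)..T, (k s + k (-s)) := by
  rw [intervalIntegral.integral_add (hk.intervalIntegrable _ _)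
    (Continuous.intervalIntegrable (by fun_prop) _ _), intervalIntegral.integral_comp_neg, neg_zero,
    add_comm, intervalIntegral.integral_add_adjacent_intervals] <;>
  exact hk.intervalIntegrable _ _

lemma I2_formula (T : ℝ) :
    (∫ s₁ in (-T)..T, ∫ s₂ in (-T)..s₁, ∫ s₃ in (-T)..s₂, ∫ s₄ in (-T)..s₃,
          Real.cos (s₁ ^ 2 - s₂ ^ 2) * Real.cos (s₃ ^ 2 - s₄ ^ 2)) =
    (PP T ^ 2 + SS T ^ 2) ^ 2 - ∫ s in (0:ℝ)..T,
      ((PP T * ((PP T - PP s) ^ 2 - (SS T - SS s) ^ 2) +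
        2 * SS T * (PP T - PP s) * (SS T - SS s)) * Real.cos (s ^ 2) +
      (2 * PP T * (PP T - PP s) * (SS T - SS s) -
        SS T * ((PP T - PP s) ^ 2 - (SS T - SS s) ^ 2)) * Real.sin (s ^ 2)) := by
  have h1 := PP_cont
  have h2 := SS_cont
  have h3 := QQ_cont T
  simp only [intervalIntegral.integral_const_mul, step1, step2]
  simp only [step3 _ (QQ_cont T)]
  rw [step4 _ (QQ_cont T), step5 _ (by fun_prop)]
  rw [eq_sub_iff_add_eq, ← intervalIntegral.integral_add
    (Continuous.intervalIntegrable (by fun_prop) _ _)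
    (Continuous.intervalIntegrable (by fun_prop) _ _)]
  rw [intervalIntegral.integral_eq_sub_of_hasDerivAt
    (f := fun s => -(PP T ^ 2 + SS T ^ 2) * ((PP T - PP s) ^ 2 + (SS T - SS s) ^ 2))]
  · simp only [PP_zero, SS_zero]; ring
  · intro s _
    have := ((((PP_deriv s).const_sub (PP T)).pow 2).add
      (((SS_deriv s).const_sub (SS T)).pow 2)).const_mul (-(PP T ^ 2 + SS T ^ 2))
    refine this.congr_deriv ?_
    simp only [QQ, PP_neg, SS_neg, neg_sq]
    simp
    ring
  · exact Continuous.intervalIntegrable (by fun_prop) _ _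

lemma GG_eq (s : ℝ) : GG 0 - GG s = (PP s : ℂ) + (SS s : ℂ) * Complex.I := by
  have hE : ∀ x : ℝ, Complex.exp (Complex.I * (x:ℂ) ^ 2) =
      (Real.cos (x ^ 2) : ℂ) + (Real.sin (x ^ 2) : ℂ) * Complex.I := by
    intro x
    rw [mul_comm, Complex.exp_mul_I]; push_cast; rfl
  have := intervalIntegral.integral_eq_sub_of_hasDerivAt (a := 0) (b := s)
    (f := fun s => GG s + ((PP s : ℂ) + (SS s : ℂ) * Complex.I)) (f' := fun _ => (0:ℂ))
    (fun x _ => by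
      have := (GG_hasDerivAt x).add
        ((PP_deriv x).ofReal_comp.add ((SS_deriv x).ofReal_comp.mul_const Complex.I))
      refine this.congr_deriv ?_
      rw [hE]; ring)
    (by simp)
  simp [PP_zero, SS_zero] at this
  linear_combination this

lemma EE_re (T s : ℝ) : (EE T s).re =
      ((PP T * ((PP T - PP s) ^ 2 - (SS T - SS s) ^ 2) +
        2 * SS T * (PP T - PP s) * (SS T - SS s)) * Real.cos (s ^ 2) +
      (2 * PP T * (PP T - PP s) * (SS T - SS s) -
        SS T * ((PP T - PP s) ^ 2 - (SS T - SS s) ^ 2)) * Real.sin (s ^ 2)) := by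
  have e : GG s - GG T = ((PP T - PP s : ℝ) : ℂ) + ((SS T - SS s : ℝ) : ℂ) * Complex.I := by
    push_cast
    linear_combination GG_eq T - GG_eq s
  have hE : Complex.exp (-(Complex.I * (s:ℂ) ^ 2)) =
      (Real.cos (s ^ 2) : ℂ) - (Real.sin (s ^ 2) : ℂ) * Complex.I := by
    rw [show -(Complex.I * (s:ℂ) ^ 2) = (-((s:ℂ) ^ 2)) * Complex.I by ring, Complex.exp_mul_I,
      Complex.cos_neg, Complex.sin_neg]; push_cast; ring
  rw [EE, GG_eq, e, hE]
  generalize PP T - PP s = a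
  generalize SS T - SS s = b
  generalize Real.cos (s ^ 2) = c
  generalize Real.sin (s ^ 2) = d
  simp [pow_two]
  ring

lemma n_lim : Tendsto (fun T : ℝ => PP T ^ 2 + SS T ^ 2) atTop (𝓝 (π / 4)) := by
  have h : Tendsto (fun T : ℝ => ‖GG 0 - GG T‖ ^ 2) atTop (𝓝 (‖GG 0 - 0‖ ^ 2)) :=
    ((tendsto_const_nhds.sub GG_tendsto).norm).pow 2
  have e : ‖GG 0 - 0‖ ^ 2 = π / 4 := by
    rw [sub_zero, GG_zero, norm_mul, om_norm, one_mul, Complex.norm_real, Real.norm_eq_abs, sq_abs,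
      div_pow, Real.sq_sqrt Real.pi_pos.le]
    norm_num
  rw [e] at h
  refine h.congr fun T => ?_
  rw [GG_eq, Complex.sq_norm, Complex.normSq_add_mul_I]

/-- The iterated improper integral
`I₂ = ∫_{-∞}^{∞} ds₁ ∫_{-∞}^{s₁} ds₂ ∫_{-∞}^{s₂} ds₃ ∫_{-∞}^{s₃} ds₄
      cos(s₁² − s₂²)·cos(s₃² − s₄²)`,
understood as the limit as `T → ∞` of the integral over the simplex
`{(s₁,s₂,s₃,s₄) : −T ≤ s₄ ≤ s₃ ≤ s₂ ≤ s₁ ≤ T}`, converges and equals `π²/16`. -/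
theorem I2_eq_pi_sq_div_sixteen :
    Tendsto (fun T : ℝ =>
        ∫ s₁ in (-T)..T, ∫ s₂ in (-T)..s₁, ∫ s₃ in (-T)..s₂, ∫ s₄ in (-T)..s₃,
          Real.cos (s₁ ^ 2 - s₂ ^ 2) * Real.cos (s₃ ^ 2 - s₄ ^ 2))
      atTop (𝓝 (π ^ 2 / 16)) := by

  have hl := (n_lim.pow 2).sub EE_lim
  have e : (π / 4) ^ 2 - 0 = π ^ 2 / 16 := by ring
  rw [e] at hl
  refine hl.congr fun T => ?_
  rw [I2_formula]
  congr 1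
  rw [← Complex.reCLM_apply, ← ContinuousLinearMap.intervalIntegral_comp_comm _
    ((EE_cont T).intervalIntegrable _ _)]
  simp only [Complex.reCLM_apply, EE_re]
end
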